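/- Fix n ≥ 1 and initial data x_1(0) < x_2(0) < ⋯ < x_n(0) in ℝ. Then there exist functions x_1, …, x_n : [0, ∞) → ℝ, differentiable, with x_1(t) < ⋯ < x_n(t) for all t ≥ 0, satisfying the prescribed initial values and the system of ordinary differential equations x_i'(t) = ∑_{k≠i} 2/(x_i(t) − x_k(t)) − x_i(t) for all t > 0 and 1 ≤ i ≤ n. Moreover, if z_1 < z_2 < ⋯ < z_n are the n zeros of the probabilist's Hermite polynomial He_n, then there is a constant c > 0 (depending on the initial data and n) such that max_{1 ≤ i ≤ n} |x_i(t) − z_i| ≤ c·e^{−t} for all t ≥ 0. -/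

import Mathlib

open Polynomial Finset

/-!
The system is the gradient flow of `∑_{k < i} 2 log (x_i - x_k) - ‖x‖² / 2`. As `u ↦ u⁻¹` is
decreasing, its interaction part is dissipative, and the term `-x` makes the distance between two
solutions decay like `exp (-t)`; the zeros of `He_n` are an equilibrium because
`He_n'' = x He_n' - n He_n` (Stieltjes).

For existence, `u⁻¹` is frozen below a small `δ`. The field becomes globally Lipschitz while
remaining dissipative, so the truncated flow exists for all time and stays bounded. The truncated
potential increases along it, and on a bounded set a lower bound for the potential keeps all
differences `x_i - x_k`, `k < i`, above `δ`: the truncation is never felt.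
-/

section GlobalExistence

open Real intervalIntegral
open scoped NNReal

variable {E : Type*} [NormedAddCommGroup E] [NormedSpace ℝ E]

theorem norm_integral_le_mul_cosh_div {f : ℝ → E} {C r : ℝ} (hr : 0 < r)
    (hf : ∀ s, ‖f s‖ ≤ C * cosh (r * s)) (t : ℝ) :
    ‖∫ s in 0..t, f s‖ ≤ C / r * cosh (r * t) := by
  have hC : 0 ≤ C := by simpa using (norm_nonneg _).trans (hf 0)
  have hint : ∫ s in 0..t, C * cosh (r * s) = C / r * sinh (r * t) := by
    have hderiv (s : ℝ) : HasDerivAt (fun s ↦ C / r * sinh (r * s)) (C * cosh (r * s)) s :=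
      ((hasDerivAt_const_mul r).sinh.const_mul (C / r)).congr_deriv (by field_simp)
    rw [integral_eq_sub_of_hasDerivAt (fun s _ ↦ hderiv s)
      (Continuous.intervalIntegrable (by fun_prop) _ _)]
    simp
  calc ‖∫ s in 0..t, f s‖ ≤ |∫ s in 0..t, C * cosh (r * s)| :=
        norm_integral_le_abs_of_norm_le (.of_forall hf)
          (Continuous.intervalIntegrable (by fun_prop) _ _)
    _ = C / r * |sinh (r * t)| := by rw [hint, abs_mul, abs_of_nonneg (by positivity)]
    _ ≤ C / r * cosh (r * t) := by
        gcongr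
        rw [abs_sinh, ← cosh_abs]
        exact (sinh_lt_cosh _).le

/-- The Picard operator of the autonomous equation `x' = v x`, `x 0 = x₀`, conjugated by the weight
`cosh (r * t)`: for `r` larger than the Lipschitz constant of `v` it contracts the bounded functions
on the whole line (Bielecki's trick). -/
noncomputable def weightedPicard (v : E → E) (x₀ : E) (r : ℝ) (y : ℝ → E) (t : ℝ) : E :=
  (cosh (r * t))⁻¹ • (x₀ + ∫ s in 0..t, v (cosh (r * s) • y s))

variable {v : E → E} {x₀ : E} {r : ℝ} {K : ℝ≥0} {y y' : ℝ → E} {M : ℝ}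

theorem continuous_weightedPicard (hv : Continuous v) (hy : Continuous y) :
    Continuous (weightedPicard v x₀ r y) := by
  have hprim : Continuous fun t ↦ ∫ s in 0..t, v (cosh (r * s) • y s) :=
    continuous_primitive (fun _ _ ↦ Continuous.intervalIntegrable (by fun_prop) _ _) 0
  exact ((by fun_prop : Continuous fun t ↦ cosh (r * t)).inv₀ fun t ↦ (cosh_pos _).ne').smul
    (continuous_const.add hprim)

theorem norm_weightedPicard_le (hv : LipschitzWith K v) (hr : 0 < r) (hy : ∀ s, ‖y s‖ ≤ M)
    (t : ℝ) : ‖weightedPicard v x₀ r y t‖ ≤ ‖x₀‖ + (‖v 0‖ + K * M) / r := by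
  have hbound (s : ℝ) : ‖v (cosh (r * s) • y s)‖ ≤ (‖v 0‖ + K * M) * cosh (r * s) := by
    calc ‖v (cosh (r * s) • y s)‖ ≤ ‖v 0‖ + K * ‖cosh (r * s) • y s‖ := by
          refine (norm_le_norm_add_norm_sub' _ (v 0)).trans ?_
          gcongr
          simpa using hv.norm_sub_le (cosh (r * s) • y s) 0
      _ ≤ ‖v 0‖ * cosh (r * s) + K * (cosh (r * s) * M) := by
          rw [norm_smul, norm_of_nonneg (cosh_pos _).le]
          have := cosh_pos (r * s)
          gcongr
          · exact le_mul_of_one_le_right (norm_nonneg _) (one_le_cosh _)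
          · exact hy s
      _ = (‖v 0‖ + K * M) * cosh (r * s) := by ring
  rw [weightedPicard, norm_smul, norm_inv, norm_of_nonneg (cosh_pos _).le,
    inv_mul_le_iff₀ (cosh_pos _)]
  calc _ ≤ ‖x₀‖ + (‖v 0‖ + K * M) / r * cosh (r * t) :=
        (norm_add_le _ _).trans <| by gcongr; exact norm_integral_le_mul_cosh_div hr hbound t
    _ ≤ _ := by nlinarith [one_le_cosh (r * t), norm_nonneg x₀]

theorem norm_weightedPicard_sub_le (hv : LipschitzWith K v) (hr : 0 < r) (hy : Continuous y)
    (hy' : Continuous y') (hM : ∀ s, ‖y s - y' s‖ ≤ M) (t : ℝ) :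
    ‖weightedPicard v x₀ r y t - weightedPicard v x₀ r y' t‖ ≤ K / r * M := by
  have hvc := hv.continuous
  have hbound (s : ℝ) :
      ‖v (cosh (r * s) • y s) - v (cosh (r * s) • y' s)‖ ≤ K * M * cosh (r * s) := by
    calc _ ≤ K * ‖cosh (r * s) • y s - cosh (r * s) • y' s‖ := hv.norm_sub_le _ _
      _ ≤ K * (cosh (r * s) * M) := by
          rw [← smul_sub, norm_smul, norm_of_nonneg (cosh_pos _).le]
          have := cosh_pos (r * s)
          gcongr
          exact hM s
      _ = K * M * cosh (r * s) := by ring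
  rw [weightedPicard, weightedPicard, ← smul_sub, add_sub_add_left_eq_sub,
    ← integral_sub (Continuous.intervalIntegrable (by fun_prop) _ _)
      (Continuous.intervalIntegrable (by fun_prop) _ _),
    norm_smul, norm_inv, norm_of_nonneg (cosh_pos _).le, inv_mul_le_iff₀ (cosh_pos _)]
  calc _ ≤ K * M / r * cosh (r * t) := norm_integral_le_mul_cosh_div hr hbound t
    _ = _ := by ring

theorem exists_weightedPicard_eq [CompleteSpace E] {r : ℝ≥0} (hv : LipschitzWith K v) (hr : K < r)
    (x₀ : E) : ∃ y : ℝ → E, Continuous y ∧ weightedPicard v x₀ r y = y := by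
  have hr₀ : 0 < r := hr.pos
  let Φ (y : BoundedContinuousFunction ℝ E) : BoundedContinuousFunction ℝ E :=
    .ofNormedAddCommGroup (weightedPicard v x₀ r y)
      (continuous_weightedPicard hv.continuous y.continuous) _
      (norm_weightedPicard_le hv hr₀ y.norm_coe_le_norm)
  have hΦ : ContractingWith (K / r) Φ := by
    refine ⟨(div_lt_one hr₀).2 hr, .of_dist_le_mul fun y y' ↦ ?_⟩
    refine (BoundedContinuousFunction.dist_le (by positivity)).2 fun t ↦ ?_
    rw [dist_eq_norm]
    exact norm_weightedPicard_sub_le hv hr₀ y.continuous y'.continuous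
      (fun s ↦ (dist_eq_norm (y s) (y' s)).symm.trans_le (y.dist_coe_le_dist s)) t
  exact ⟨hΦ.fixedPoint, hΦ.fixedPoint.continuous, congrArg DFunLike.coe hΦ.fixedPoint_isFixedPt⟩

theorem exists_isIntegralCurve_of_lipschitzWith [CompleteSpace E] (hv : LipschitzWith K v)
    (x₀ : E) : ∃ γ : ℝ → E, γ 0 = x₀ ∧ IsIntegralCurve γ fun _ ↦ v := by
  have hvc := hv.continuous
  obtain ⟨y, hy, hfix⟩ := exists_weightedPicard_eq hv (lt_add_one K) x₀
  set γ : ℝ → E := fun t ↦ cosh ((K + 1 : ℝ≥0) * t) • y t with hγ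
  have hγ_eq : γ = fun t ↦ x₀ + ∫ s in 0..t, v (γ s) := by
    ext t
    simp only [hγ]
    nth_rw 1 [← hfix, weightedPicard, smul_inv_smul₀ (cosh_pos _).ne']
  have hvγ : Continuous fun t ↦ v (γ t) := by fun_prop
  refine ⟨γ, by rw [hγ_eq]; simp, fun t ↦ ?_⟩
  nth_rw 1 [hγ_eq]
  exact (hvγ.integral_hasStrictDerivAt 0 t).hasDerivAt.const_add x₀

end GlobalExistence

section GradientFlow

open Real
open scoped RealInnerProductSpace

variable {E : Type*} [NormedAddCommGroup E] [InnerProductSpace ℝ E] {v : E → E} {γ η : ℝ → E}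

theorem antitone_exp_mul_norm_sub_of_dissipative {μ : ℝ}
    (hv : ∀ x y, ⟪x - y, v x - v y⟫ ≤ -μ * ‖x - y‖ ^ 2)
    (hγ : IsIntegralCurve γ fun _ ↦ v) (hη : IsIntegralCurve η fun _ ↦ v) :
    Antitone fun t ↦ exp (μ * t) * ‖γ t - η t‖ := by
  have hderiv (t : ℝ) : HasDerivAt (fun t ↦ exp (2 * μ * t) * ‖γ t - η t‖ ^ 2)
      (2 * exp (2 * μ * t) *
        (⟪γ t - η t, v (γ t) - v (η t)⟫ + μ * ‖γ t - η t‖ ^ 2)) t :=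
    ((hasDerivAt_const_mul (2 * μ)).exp.mul ((hγ t).sub (hη t)).norm_sq).congr_deriv
      (by simp only [Pi.sub_apply]; ring)
  have hanti := antitone_of_hasDerivAt_nonpos hderiv fun t ↦
    mul_nonpos_of_nonneg_of_nonpos (by positivity) (by linarith [hv (γ t) (η t)])
  have hsq (t : ℝ) :
      (exp (μ * t) * ‖γ t - η t‖) ^ 2 = exp (2 * μ * t) * ‖γ t - η t‖ ^ 2 := by
    rw [mul_pow, ← exp_nat_mul]
    ring_nf
  exact fun s t hst ↦ (pow_le_pow_iff_left₀ (by positivity) (by positivity) two_ne_zero).1 <| by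
    simpa only [hsq] using hanti hst

theorem monotone_comp_of_hasGradientAt [CompleteSpace E] {Φ : E → ℝ}
    (hΦ : ∀ x, HasGradientAt Φ (v x) x) (hγ : IsIntegralCurve γ fun _ ↦ v) :
    Monotone (Φ ∘ γ) := by
  refine monotone_of_hasDerivAt_nonneg (f' := fun t ↦ ‖v (γ t)‖ ^ 2) (fun t ↦ ?_)
    fun t ↦ sq_nonneg _
  exact ((hΦ (γ t)).hasFDerivAt.comp_hasDerivAt t (hγ t)).congr_deriv (by simp)

end GradientFlow

section RidgeField

open scoped RealInnerProductSpace NNReal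

variable {ι E : Type*} [Fintype ι] [NormedAddCommGroup E] [InnerProductSpace ℝ E]

/-- The gradient field of `ridgePotential`, where `h` is the derivative of the profile `H`: each
ridge `c p * H ⟪b p, x⟫` pushes along `b p`, against the linear restoring force `-x`. -/
noncomputable def ridgeField (c : ι → ℝ) (b : ι → E) (h : ℝ → ℝ) (x : E) : E :=
  ∑ p, (c p * h ⟪b p, x⟫) • b p - x

/-- A sum of ridge functions (functions of the single variable `⟪b p, x⟫`) of profile `H`, confined
by the harmonic potential. With `H = log` the walls `⟪b p, x⟫ = 0` repel logarithmically. -/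
noncomputable def ridgePotential (c : ι → ℝ) (b : ι → E) (H : ℝ → ℝ) (x : E) : ℝ :=
  ∑ p, c p * H ⟪b p, x⟫ - ‖x‖ ^ 2 / 2

variable {c : ι → ℝ} {b : ι → E} {h H : ℝ → ℝ}

theorem hasGradientAt_ridgePotential [CompleteSpace E] (hH : ∀ u, HasDerivAt H (h u) u) (x : E) :
    HasGradientAt (ridgePotential c b H) (ridgeField c b h x) x := by
  have hridge (p : ι) : HasFDerivAt (fun x ↦ c p * H ⟪b p, x⟫)
      ((c p * h ⟪b p, x⟫) • innerSL ℝ (b p)) x := by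
    simpa [mul_smul] using
      ((hH _).comp_hasFDerivAt x (innerSL ℝ (b p)).hasFDerivAt).const_mul (c p)
  have hsq : HasFDerivAt (fun x : E ↦ ‖x‖ ^ 2 / 2) (innerSL ℝ x) x := by
    simpa [div_eq_inv_mul, smul_smul, ← ofNat_smul_eq_nsmul ℝ] using
      (hasFDerivAt_id x).norm_sq.const_mul 2⁻¹
  refine ((HasFDerivAt.fun_sum fun p _ ↦ hridge p).sub hsq).congr_fderiv ?_
  ext y
  simp [ridgeField]

theorem inner_sub_ridgeField_sub_le (hc : ∀ p, 0 ≤ c p) (hh : Antitone h) (x y : E) :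
    ⟪x - y, ridgeField c b h x - ridgeField c b h y⟫ ≤ -‖x - y‖ ^ 2 := by
  have hsplit : ⟪x - y, ridgeField c b h x - ridgeField c b h y⟫
      = ∑ p, c p * ((h ⟪b p, x⟫ - h ⟪b p, y⟫) * (⟪b p, x⟫ - ⟪b p, y⟫)) - ‖x - y‖ ^ 2 := by
    rw [ridgeField, ridgeField, sub_sub_sub_comm, ← sum_sub_distrib, inner_sub_right, inner_sum,
      real_inner_self_eq_norm_sq]
    congr 1
    refine sum_congr rfl fun p _ ↦ ?_
    rw [← sub_smul, real_inner_smul_right, real_inner_comm (b p), inner_sub_right]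
    ring
  have hterm (p : ι) : c p * ((h ⟪b p, x⟫ - h ⟪b p, y⟫) * (⟪b p, x⟫ - ⟪b p, y⟫)) ≤ 0 := by
    refine mul_nonpos_of_nonneg_of_nonpos (hc p) ?_
    rcases le_total ⟪b p, x⟫ ⟪b p, y⟫ with hle | hle
    · exact mul_nonpos_of_nonneg_of_nonpos (sub_nonneg.2 (hh hle)) (sub_nonpos.2 hle)
    · exact mul_nonpos_of_nonpos_of_nonneg (sub_nonpos.2 (hh hle)) (sub_nonneg.2 hle)
  linarith [sum_nonpos fun p (_ : p ∈ univ) ↦ hterm p]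

theorem lipschitzWith_ridgeField {K : ℝ≥0} (hh : LipschitzWith K h) :
    LipschitzWith (∑ p, ‖c p‖₊ * K * ‖b p‖₊ ^ 2 + 1) (ridgeField c b h) := by
  have hterm (x y : E) (p : ι) : ‖(c p * h ⟪b p, x⟫) • b p - (c p * h ⟪b p, y⟫) • b p‖
      ≤ ‖c p‖ * K * ‖b p‖ ^ 2 * ‖x - y‖ :=
    calc _ = ‖c p‖ * ‖h ⟪b p, x⟫ - h ⟪b p, y⟫‖ * ‖b p‖ := by
          rw [← sub_smul, ← mul_sub, norm_smul, norm_mul]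
      _ ≤ ‖c p‖ * (K * (‖b p‖ * ‖x - y‖)) * ‖b p‖ := by
          gcongr
          refine (hh.norm_sub_le _ _).trans ?_
          gcongr
          rw [← inner_sub_right]
          exact norm_inner_le_norm _ _
      _ = _ := by ring
  refine .of_dist_le_mul fun x y ↦ ?_
  rw [dist_eq_norm, dist_eq_norm, ridgeField, ridgeField, sub_sub_sub_comm, ← sum_sub_distrib]
  push_cast
  rw [add_mul, one_mul, sum_mul]
  exact (norm_sub_le _ _).trans (add_le_add_left (norm_sum_le_of_le _ fun p _ ↦ hterm x y p) _)

end RidgeField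

section TruncatedLog

open Real intervalIntegral

/-- The inverse `u⁻¹`, frozen at the value `δ⁻¹` for `u ≤ δ`, which makes it globally Lipschitz and
antitone. -/
noncomputable def truncInv (δ u : ℝ) : ℝ := (max u δ)⁻¹

/-- The primitive of `truncInv δ` that agrees with `log` on `[δ, ∞)`; below `δ` it continues along
the tangent line. -/
noncomputable def truncLog (δ u : ℝ) : ℝ := log δ + ∫ s in δ..u, truncInv δ s

variable {δ u : ℝ}

theorem truncInv_of_le (hu : δ ≤ u) : truncInv δ u = u⁻¹ := by
  rw [truncInv, max_eq_left hu]

theorem truncInv_pos (hδ : 0 < δ) (u : ℝ) : 0 < truncInv δ u :=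
  inv_pos.2 (lt_max_of_lt_right hδ)

theorem antitone_truncInv (hδ : 0 < δ) : Antitone (truncInv δ) := fun _ _ huw ↦
  inv_anti₀ (lt_max_of_lt_right hδ) (max_le_max_right δ huw)

theorem lipschitzWith_truncInv (hδ : 0 < δ) : LipschitzWith (δ ^ 2)⁻¹.toNNReal (truncInv δ) := by
  refine .of_dist_le_mul fun u w ↦ ?_
  have hu : 0 < max u δ := lt_max_of_lt_right hδ
  have hw : 0 < max w δ := lt_max_of_lt_right hδ
  calc dist (truncInv δ u) (truncInv δ w)
      = (max u δ * max w δ)⁻¹ * |max u δ - max w δ| := by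
        rw [truncInv, truncInv, dist_inv_inv₀ hu.ne' hw.ne', Real.dist_eq, norm_of_nonneg hu.le,
          norm_of_nonneg hw.le, div_eq_inv_mul]
    _ ≤ (δ * δ)⁻¹ * |u - w| := by
        gcongr ?_ * ?_
        · exact inv_anti₀ (by positivity) (by gcongr <;> exact le_max_right _ _)
        · exact abs_max_sub_max_le_abs u w δ
    _ = (δ ^ 2)⁻¹.toNNReal * dist u w := by
        rw [coe_toNNReal _ (by positivity), Real.dist_eq, sq]

theorem hasDerivAt_truncLog (hδ : 0 < δ) (u : ℝ) : HasDerivAt (truncLog δ) (truncInv δ u) u :=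
  ((lipschitzWith_truncInv hδ).continuous.integral_hasStrictDerivAt δ u).hasDerivAt.const_add _

theorem strictMono_truncLog (hδ : 0 < δ) : StrictMono (truncLog δ) :=
  strictMono_of_hasDerivAt_pos (hasDerivAt_truncLog hδ) (truncInv_pos hδ)

theorem truncLog_of_le (hδ : 0 < δ) (hu : δ ≤ u) : truncLog δ u = log u := by
  have hcongr : ∫ s in δ..u, truncInv δ s = ∫ s in δ..u, s⁻¹ :=
    integral_congr fun s hs ↦ truncInv_of_le (Set.uIcc_of_le hu ▸ hs).1
  rw [truncLog, hcongr, integral_inv_of_pos hδ (hδ.trans_le hu),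
    log_div (hδ.trans_le hu).ne' hδ.ne', add_sub_cancel]

theorem truncLog_le_of_le {B : ℝ} (hδ : 0 < δ) (hδB : δ ≤ B) (hu : u ≤ B) : truncLog δ u ≤ B :=
  calc truncLog δ u ≤ truncLog δ B := (strictMono_truncLog hδ).monotone hu
    _ = log B := truncLog_of_le hδ hδB
    _ ≤ B := log_le_self (hδ.le.trans hδB)

theorem lt_of_log_lt_truncLog (hδ : 0 < δ) (h : log δ < truncLog δ u) : δ < u :=
  (strictMono_truncLog hδ).lt_iff_lt.1 ((truncLog_of_le hδ le_rfl).trans_lt h)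

end TruncatedLog

section LogBarrier

open Real Filter
open scoped RealInnerProductSpace Topology

theorem exists_pos_le_and_mul_log_lt {ι : Type*} [Finite ι] {a c : ι → ℝ} (ha : ∀ p, 0 < a p)
    (hc : ∀ p, 0 < c p) (m : ℝ) :
    ∃ δ, 0 < δ ∧ (∀ p, δ ≤ a p) ∧ ∀ p, c p * log δ < m := by
  have hle : ∀ᶠ δ in 𝓝[>] (0 : ℝ), ∀ p, δ ≤ a p :=
    eventually_all.2 fun p ↦ eventually_nhdsWithin_of_eventually_nhds (eventually_le_nhds (ha p))
  have hlog : ∀ᶠ δ in 𝓝[>] (0 : ℝ), ∀ p, c p * log δ < m :=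
    eventually_all.2 fun p ↦
      (tendsto_log_nhdsGT_zero.const_mul_atBot (hc p)).eventually_lt_atBot m
  exact (eventually_mem_nhdsWithin.and (hle.and hlog)).exists

variable {ι E : Type*} [Fintype ι] [NormedAddCommGroup E] [InnerProductSpace ℝ E]
  {c : ι → ℝ} {b : ι → E} {δ : ℝ} {x : E}

theorem ridgePotential_truncLog (hδ : 0 < δ) (hx : ∀ p, δ ≤ ⟪b p, x⟫) :
    ridgePotential c b (truncLog δ) x = ridgePotential c b log x := by
  simp only [ridgePotential, truncLog_of_le hδ (hx _)]

theorem ridgeField_truncInv (hx : ∀ p, δ ≤ ⟪b p, x⟫) :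
    ridgeField c b (truncInv δ) x = ridgeField c b (·⁻¹) x := by
  simp only [ridgeField, truncInv_of_le (hx _)]

theorem lt_inner_of_le_ridgePotential {R m : ℝ} {q : ι} (hc : ∀ p, 0 < c p) (hδ : 0 < δ)
    (hδR : ∀ p, δ ≤ ‖b p‖ * R) (hxR : ‖x‖ ≤ R) (hm : m ≤ ridgePotential c b (truncLog δ) x)
    (hq : c q * log δ < m - ∑ p, c p * (‖b p‖ * R)) : δ < ⟪b q, x⟫ := by
  have hterm (p : ι) : c p * truncLog δ ⟪b p, x⟫ ≤ c p * (‖b p‖ * R) :=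
    mul_le_mul_of_nonneg_left
      (truncLog_le_of_le hδ (hδR p) ((real_inner_le_norm _ _).trans (by gcongr))) (hc p).le
  have hrest : c q * (‖b q‖ * R) - c q * truncLog δ ⟪b q, x⟫
      ≤ ∑ p, (c p * (‖b p‖ * R) - c p * truncLog δ ⟪b p, x⟫) :=
    single_le_sum (f := fun p ↦ c p * (‖b p‖ * R) - c p * truncLog δ ⟪b p, x⟫)
      (fun p _ ↦ sub_nonneg.2 (hterm p)) (mem_univ q)
  rw [sum_sub_distrib] at hrest
  have hB : 0 ≤ c q * (‖b q‖ * R) := mul_nonneg (hc q).le (hδ.le.trans (hδR q))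
  rw [ridgePotential] at hm
  have hlog : c q * log δ < c q * truncLog δ ⟪b q, x⟫ := by linarith [sq_nonneg ‖x‖]
  exact lt_of_log_lt_truncLog hδ (lt_of_mul_lt_mul_left hlog (hc q).le)

theorem exists_integralCurve_logBarrier [CompleteSpace E] {x₀ z : E} (hc : ∀ p, 0 < c p)
    (hx₀ : ∀ p, 0 < ⟪b p, x₀⟫) (hz : ∀ p, 0 < ⟪b p, z⟫) (hz_eq : ridgeField c b (·⁻¹) z = 0) :
    ∃ γ : ℝ → E, γ 0 = x₀ ∧ ∀ t, 0 ≤ t → (∀ p, 0 < ⟪b p, γ t⟫) ∧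
      HasDerivAt γ (ridgeField c b (·⁻¹) (γ t)) t ∧ ‖γ t - z‖ ≤ exp (-t) * ‖x₀ - z‖ := by
  set R : ℝ := ‖x₀ - z‖ + ‖z‖ with hR
  obtain ⟨δ, hδ, hδ_le, hδ_log⟩ := exists_pos_le_and_mul_log_lt
    (fun p ↦ lt_min (hx₀ p) (hz p)) hc (ridgePotential c b log x₀ - ∑ p, c p * (‖b p‖ * R))
  have hδx₀ (p : ι) : δ ≤ ⟪b p, x₀⟫ := (hδ_le p).trans (min_le_left _ _)
  have hδz (p : ι) : δ ≤ ⟪b p, z⟫ := (hδ_le p).trans (min_le_right _ _)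
  obtain ⟨γ, hγ₀, hγ⟩ := exists_isIntegralCurve_of_lipschitzWith
    (lipschitzWith_ridgeField (c := c) (b := b) (lipschitzWith_truncInv hδ)) x₀
  have hz_curve : IsIntegralCurve (fun _ ↦ z) fun _ ↦ ridgeField c b (truncInv δ) := fun t ↦ by
    simpa only [ridgeField_truncInv hδz, hz_eq] using hasDerivAt_const t z
  have hdecay {t : ℝ} (ht : 0 ≤ t) : ‖γ t - z‖ ≤ exp (-t) * ‖x₀ - z‖ := by
    have hle := antitone_exp_mul_norm_sub_of_dissipative (μ := 1) (fun x y ↦ by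
      simpa using inner_sub_ridgeField_sub_le (fun p ↦ (hc p).le) (antitone_truncInv hδ) x y)
      hγ hz_curve ht
    rw [exp_neg, ← div_eq_inv_mul, le_div_iff₀' (exp_pos t)]
    simpa [hγ₀] using hle
  have hnorm {t : ℝ} (ht : 0 ≤ t) : ‖γ t‖ ≤ R :=
    calc ‖γ t‖ ≤ ‖γ t - z‖ + ‖z‖ := norm_le_norm_sub_add _ _
      _ ≤ R := by
        rw [hR]
        gcongr
        exact (hdecay ht).trans (mul_le_of_le_one_left (norm_nonneg _) (by simpa))
  have hinner {t : ℝ} (ht : 0 ≤ t) (q : ι) : δ < ⟪b q, γ t⟫ := by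
    refine lt_inner_of_le_ridgePotential hc hδ (fun p ↦ (hδz p).trans ?_) (hnorm ht) ?_ (hδ_log q)
    · exact (real_inner_le_norm _ _).trans (by gcongr; simp [hR])
    · rw [← ridgePotential_truncLog hδ hδx₀, ← hγ₀]
      exact monotone_comp_of_hasGradientAt
        (hasGradientAt_ridgePotential (hasDerivAt_truncLog hδ)) hγ ht
  refine ⟨γ, hγ₀, fun t ht ↦ ⟨fun p ↦ hδ.trans (hinner ht p), ?_, hdecay ht⟩⟩
  rw [← ridgeField_truncInv fun p ↦ (hinner ht p).le]
  exact hγ t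

end LogBarrier

section PositiveRoots

open EuclideanSpace
open scoped RealInnerProductSpace

variable {ι : Type*} [LinearOrder ι]

/-- The positive roots `e i - e j`, `j < i`, of the root system of type `A`, encoded by the pair
`(i, j)`. The Weyl chamber they cut out consists of the strictly increasing vectors. -/
noncomputable def posRoot (p : {p : ι × ι // p.2 < p.1}) : EuclideanSpace ℝ ι :=
  single p.1.1 1 - single p.1.2 1

variable [Fintype ι]

theorem inner_posRoot (p : {p : ι × ι // p.2 < p.1}) (x : EuclideanSpace ℝ ι) :
    ⟪posRoot p, x⟫ = x p.1.1 - x p.1.2 := by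
  simp [posRoot, inner_sub_left, inner_single_left]

theorem forall_inner_posRoot_pos_iff_strictMono {x : EuclideanSpace ℝ ι} :
    (∀ p, 0 < ⟪posRoot p, x⟫) ↔ StrictMono x := by
  simp only [inner_posRoot, sub_pos]
  exact ⟨fun h j i hji ↦ h ⟨(i, j), hji⟩, fun h p ↦ h p.2⟩

theorem sum_subtype_lt_mul_single_sub_single (g : ι → ι → ℝ) (hg : ∀ j k, g k j = -g j k) (i : ι) :
    ∑ p : {p : ι × ι // p.2 < p.1},
      g p.1.1 p.1.2 * ((Pi.single p.1.1 1 : ι → ℝ) i - (Pi.single p.1.2 1 : ι → ℝ) i)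
      = ∑ k ∈ univ.erase i, g i k := by
  have hterm (j k : ι) : (if k < j then
      g j k * ((Pi.single j 1 : ι → ℝ) i - (Pi.single k 1 : ι → ℝ) i) else 0)
      = (if i = j then if k < i then g i k else 0 else 0)
        + if i = k then if i < j then g i j else 0 else 0 := by
    have := hg j k
    simp only [Pi.single_apply]
    grind
  have hdiag : g i i = 0 := self_eq_neg.1 (hg i i)
  rw [sum_erase _ hdiag, ← sum_subtype (univ.filter fun p : ι × ι ↦ p.2 < p.1) (by simp)
      fun p ↦ g p.1 p.2 * ((Pi.single p.1 1 : ι → ℝ) i - (Pi.single p.2 1 : ι → ℝ) i),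
    sum_filter, Fintype.sum_prod_type]
  simp only [hterm, sum_add_distrib]
  rw [sum_comm (f := fun j k ↦ if i = k then if i < j then g i j else 0 else 0)]
  simp only [sum_ite_irrel, sum_const_zero, sum_ite_eq, mem_univ, if_true, ← sum_add_distrib]
  refine sum_congr rfl fun k _ ↦ ?_
  rcases lt_trichotomy k i with h | rfl | h
  · simp [h, h.not_gt]
  · simp [hdiag]
  · simp [h, h.not_gt]

theorem ridgeField_posRoot_inv_apply (c : ℝ) (x : EuclideanSpace ℝ ι) (i : ι) :
    ridgeField (fun _ ↦ c) posRoot (·⁻¹) x i = ∑ k ∈ univ.erase i, c / (x i - x k) - x i := by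
  have hsum := sum_subtype_lt_mul_single_sub_single (fun j k ↦ c * (x j - x k)⁻¹)
    (fun j k ↦ by rw [← neg_sub, inv_neg, mul_neg]) i
  simp only [ridgeField, inner_posRoot]
  simpa [posRoot, div_eq_mul_inv] using hsum

end PositiveRoots

section Stieltjes

open Lagrange

theorem eval_derivative_nodal_eq_mul_sum {ι F : Type*} [Field F] {s : Finset ι} {v : ι → F} {a : F}
    (ha : ∀ k ∈ s, a ≠ v k) :
    eval a (derivative (nodal s v)) = eval a (nodal s v) * ∑ k ∈ s, (a - v k)⁻¹ := by
  classical
  rw [derivative_nodal, eval_finsetSum, mul_sum]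
  refine sum_congr rfl fun k hk ↦ ?_
  rw [nodal_eq_mul_nodal_erase hk, eval_mul, eval_sub, eval_X, eval_C, mul_comm (a - v k),
    mul_inv_cancel_right₀ (sub_ne_zero.2 (ha k hk))]

theorem eval_node_derivative_derivative_nodal {ι R : Type*} [CommRing R] [DecidableEq ι]
    {s : Finset ι} {v : ι → R} {i : ι} (hi : i ∈ s) :
    eval (v i) (derivative (derivative (nodal s v)))
      = 2 * eval (v i) (derivative (nodal (s.erase i) v)) := by
  rw [nodal_eq_mul_nodal_erase hi]
  simp [two_mul]

theorem eval_node_derivative_derivative_nodal_eq_mul_sum {ι F : Type*} [Field F] [DecidableEq ι]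
    {s : Finset ι} {v : ι → F} (hv : Set.InjOn v s) {i : ι} (hi : i ∈ s) :
    eval (v i) (derivative (derivative (nodal s v)))
      = eval (v i) (derivative (nodal s v)) * ∑ k ∈ s.erase i, 2 / (v i - v k) := by
  have hne : ∀ k ∈ s.erase i, v i ≠ v k := fun k hk ↦
    hv.ne hi (mem_of_mem_erase hk) (ne_of_mem_erase hk).symm
  rw [eval_node_derivative_derivative_nodal hi, eval_derivative_nodal_eq_mul_sum hne,
    eval_nodal_derivative_eval_node_eq hi, mul_left_comm, mul_sum _ _ 2]
  simp only [div_eq_mul_inv]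

theorem derivative_hermite_succ (n : ℕ) :
    derivative (hermite (n + 1)) = ((n : ℤ[X]) + 1) * hermite n := by
  induction n with
  | zero => simp
  | succ n ih =>
    rw [hermite_succ (n + 1), derivative_sub, derivative_mul, derivative_X, ih, derivative_mul,
      derivative_add, derivative_natCast, derivative_one, hermite_succ n]
    push_cast
    ring

theorem derivative_derivative_hermite (n : ℕ) :
    derivative (derivative (hermite n)) = X * derivative (hermite n) - (n : ℤ[X]) * hermite n := by
  cases n with
  | zero => simp
  | succ n =>
    rw [derivative_hermite_succ, derivative_mul, derivative_add, derivative_natCast,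
      derivative_one, hermite_succ n]
    push_cast
    ring

theorem sum_two_div_sub_eq_of_hermite_eq_prod {ι F : Type*} [Field F] [Fintype ι] [DecidableEq ι]
    {n : ℕ} {z : ι → F} (hz : z.Injective)
    (hroots : (hermite n).map (Int.castRingHom F) = ∏ k, (X - C (z k))) (i : ι) :
    ∑ k ∈ univ.erase i, 2 / (z i - z k) = z i := by
  have hode := congrArg (eval (z i) ∘ map (Int.castRingHom F)) (derivative_derivative_hermite n)
  simp only [Function.comp_apply, Polynomial.map_sub, Polynomial.map_mul, map_X,
    Polynomial.map_natCast, ← derivative_map, hroots, ← nodal_eq, eval_sub, eval_mul, eval_X,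
    eval_nodal_at_node (mem_univ i), mul_zero, sub_zero,
    eval_node_derivative_derivative_nodal_eq_mul_sum hz.injOn (mem_univ i)] at hode
  have hne : eval (z i) (derivative (nodal univ z)) ≠ 0 := by
    rw [eval_nodal_derivative_eval_node_eq (mem_univ i)]
    exact eval_nodal_not_at_node fun k hk ↦ hz.ne (ne_of_mem_erase hk).symm
  exact mul_left_cancel₀ hne (hode.trans (mul_comm _ _))

end Stieltjes

theorem ridgeField_posRoot_inv_eq_zero_of_hermite_eq_prod {ι : Type*} [LinearOrder ι] [Fintype ι]
    {n : ℕ} {z : ι → ℝ} (hz : z.Injective)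
    (hroots : (hermite n).map (Int.castRingHom ℝ) = ∏ k, (X - C (z k))) :
    ridgeField (fun _ ↦ 2) posRoot (·⁻¹) (WithLp.toLp 2 z) = 0 := by
  ext i
  rw [ridgeField_posRoot_inv_apply, sum_two_div_sub_eq_of_hermite_eq_prod hz hroots]
  exact sub_self _

theorem stmt_18 (n : ℕ) (hn : 1 ≤ n)
    (x0 : Fin n → ℝ) (hx0 : StrictMono x0)
    (z : Fin n → ℝ) (hz : StrictMono z)
    (hzroots : (Polynomial.hermite n).map (Int.castRingHom ℝ)
        = ∏ k, (X - C (z k))) :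
    ∃ f : Fin n → ℝ → ℝ,
      (∀ i, f i 0 = x0 i) ∧
      (∀ i, DifferentiableOn ℝ (f i) (Set.Ici (0 : ℝ))) ∧
      (∀ t ∈ Set.Ici (0 : ℝ), StrictMono (fun i => f i t)) ∧
      (∀ i : Fin n, ∀ t : ℝ, 0 < t →
        HasDerivAt (f i)
          ((∑ k ∈ univ.erase i, 2 / (f i t - f k t)) - f i t) t) ∧
      ∃ c : ℝ, 0 < c ∧ ∀ t ∈ Set.Ici (0 : ℝ), ∀ i : Fin n,
        |f i t - z i| ≤ c * Real.exp (-t) := by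
  obtain ⟨γ, hγ₀, hγ⟩ := exists_integralCurve_logBarrier (x₀ := WithLp.toLp 2 x0)
    (fun _ ↦ two_pos) (forall_inner_posRoot_pos_iff_strictMono.2 hx0)
    (forall_inner_posRoot_pos_iff_strictMono.2 hz)
    (ridgeField_posRoot_inv_eq_zero_of_hermite_eq_prod hz.injective hzroots)
  have hderiv (i : Fin n) {t : ℝ} (ht : 0 ≤ t) :
      HasDerivAt (fun t ↦ γ t i) ((∑ k ∈ univ.erase i, 2 / (γ t i - γ t k)) - γ t i) t := by
    rw [← ridgeField_posRoot_inv_apply]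
    exact (EuclideanSpace.proj i).hasFDerivAt.comp_hasDerivAt t (hγ t ht).2.1
  refine ⟨fun i t ↦ γ t i, fun i ↦ by simp [hγ₀],
    fun i t ht ↦ (hderiv i ht).differentiableAt.differentiableWithinAt,
    fun t ht ↦ forall_inner_posRoot_pos_iff_strictMono.1 (hγ t ht).1,
    fun i t ht ↦ hderiv i ht.le, ‖WithLp.toLp 2 x0 - WithLp.toLp 2 z‖ + 1, by positivity,
    fun t ht i ↦ ?_⟩
  calc |γ t i - z i| ≤ ‖γ t - WithLp.toLp 2 z‖ := PiLp.norm_apply_le (γ t - WithLp.toLp 2 z) i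
    _ ≤ Real.exp (-t) * ‖WithLp.toLp 2 x0 - WithLp.toLp 2 z‖ := (hγ t ht).2.2
    _ ≤ (‖WithLp.toLp 2 x0 - WithLp.toLp 2 z‖ + 1) * Real.exp (-t) := by
        nlinarith [Real.exp_pos (-t)]
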